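/- arXiv:math/0405226 — 8 statements merged into one kernel-verified Lean document; each statement's English description precedes it below -/
import Mathlib

section
/- Let R be a commutative ring and I ⊆ R a finitely generated ideal with Iⁿ = 0 for some n. Then for every R-module M, the cardinality of M is at most the maximum of the cardinality of M/IM and ℵ₀ (i.e. #M ≤ max(#(M/IM), ℵ₀)). -/
universe u v

/-!
If `I` is generated by `s₁, …, s_d`, then every element of `M` is `a + ∑ sᵢ • bᵢ`, where `a` runs
through representatives of `M/IM`. Modulo `I^(k+1) M` only the classes of the `bᵢ` modulo `I^k M`
matter, so `M/IM × (M/I^k M)^d` surjects onto `M/I^(k+1) M`. By induction on `k`, every `M/I^k M`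
has cardinality at most `max #(M/IM) ℵ₀`, and for `k = n` this quotient is `M` itself.
-/

theorem exists_sum_smul_of_mem_span_smul_top {R : Type u} [CommRing R] {M : Type v}
    [AddCommGroup M] [Module R M] {d : ℕ} (s : Fin d → R) {x : M}
    (hx : x ∈ Ideal.span (Set.range s) • (⊤ : Submodule R M)) :
    ∃ f : Fin d → M, ∑ i, s i • f i = x := by
  induction hx using Submodule.smul_induction_on' with
  | smul r hr m _ =>
    obtain ⟨c, rfl⟩ := Ideal.mem_span_range_iff_exists_fun.1 hr
    exact ⟨fun i => c i • m, by simp [Finset.sum_smul, smul_smul, mul_comm]⟩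
  | add x _ y _ hx hy =>
    obtain ⟨f, rfl⟩ := hx
    obtain ⟨g, rfl⟩ := hy
    exact ⟨f + g, by simp [Finset.sum_add_distrib]⟩

theorem mk_quotient_pow_smul_top_le {R : Type u} [CommRing R] {I : Ideal R} (hfg : I.FG)
    (M : Type v) [AddCommGroup M] [Module R M] (k : ℕ) :
    Cardinal.mk (M ⧸ (I ^ k • (⊤ : Submodule R M))) ≤
      max (Cardinal.mk (M ⧸ (I • (⊤ : Submodule R M)))) Cardinal.aleph0 := by
  obtain ⟨d, s, rfl⟩ := Submodule.fg_iff_exists_fin_generating_family.1 hfg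
  change Cardinal.mk (M ⧸ (Ideal.span (Set.range s) ^ k • (⊤ : Submodule R M))) ≤
    max (Cardinal.mk (M ⧸ (Ideal.span (Set.range s) • (⊤ : Submodule R M)))) Cardinal.aleph0
  set I := Ideal.span (Set.range s)
  induction k with
  | zero =>
    have : Subsingleton (M ⧸ (I ^ 0 • (⊤ : Submodule R M))) := by
      rw [Submodule.Quotient.subsingleton_iff]
      simp
    exact (Cardinal.le_one_iff_subsingleton.2 this).trans
      (Cardinal.one_le_aleph0.trans (le_max_right _ _))
  | succ k ih =>
    set κ := max (Cardinal.mk (M ⧸ (I • (⊤ : Submodule R M)))) Cardinal.aleph0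
    have hκ : Cardinal.aleph0 ≤ κ := le_max_right _ _
    let φ : (M ⧸ (I • (⊤ : Submodule R M))) × (Fin d → M ⧸ (I ^ k • (⊤ : Submodule R M))) →
        M ⧸ (I ^ (k + 1) • (⊤ : Submodule R M)) :=
      fun p => Submodule.Quotient.mk (p.1.out + ∑ i, s i • (p.2 i).out)
    have hφ : Function.Surjective φ := by
      intro y
      obtain ⟨m, rfl⟩ := Submodule.Quotient.mk_surjective _ y
      let a : M ⧸ (I • (⊤ : Submodule R M)) := Submodule.Quotient.mk m
      have ha : m - a.out ∈ I • (⊤ : Submodule R M) :=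
        (Submodule.Quotient.eq _).1 (Quotient.out_eq a).symm
      obtain ⟨f, hf⟩ := exists_sum_smul_of_mem_span_smul_top s ha
      let b : Fin d → M ⧸ (I ^ k • (⊤ : Submodule R M)) := fun i => Submodule.Quotient.mk (f i)
      have hb : ∀ i, (b i).out - f i ∈ I ^ k • (⊤ : Submodule R M) := fun i =>
        (Submodule.Quotient.eq _).1 (Quotient.out_eq (b i))
      refine ⟨(a, b), (Submodule.Quotient.eq _).2 ?_⟩
      have key : a.out + ∑ i, s i • (b i).out - m = ∑ i, s i • ((b i).out - f i) := by
        simp only [smul_sub, Finset.sum_sub_distrib, hf]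
        abel
      change a.out + ∑ i, s i • (b i).out - m ∈ _
      rw [key, pow_succ', ← smul_eq_mul, Submodule.smul_assoc]
      exact Submodule.sum_mem _ fun i _ =>
        Submodule.smul_mem_smul (Ideal.subset_span ⟨i, rfl⟩) (hb i)
    calc _ ≤ _ := Cardinal.mk_le_of_surjective hφ
      _ = Cardinal.mk (M ⧸ (I • (⊤ : Submodule R M))) *
          Cardinal.mk (M ⧸ (I ^ k • (⊤ : Submodule R M))) ^ d := by simp
      _ ≤ κ * κ := mul_le_mul' (le_max_left _ _)
          ((pow_le_pow_left' ih d).trans (Cardinal.power_nat_le hκ))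
      _ = κ := Cardinal.mul_eq_self hκ

/-- Let `R` be a commutative ring and `I ⊆ R` a finitely generated ideal with `Iⁿ = 0` for
some `n`. Then for every `R`-module `M`, the cardinality of `M` is at most the maximum of the
cardinality of `M/IM` and `ℵ₀`. -/
theorem cardinal_mk_le_of_nilpotent_ideal (R : Type u) [CommRing R] (I : Ideal R)
    (hfg : I.FG) (n : ℕ) (hI : I ^ n = 0)
    (M : Type v) [AddCommGroup M] [Module R M] :
    Cardinal.mk M ≤
      max (Cardinal.mk (M ⧸ (I • (⊤ : Submodule R M)))) Cardinal.aleph0 := by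
  have hbot : I ^ n • (⊤ : Submodule R M) = ⊥ := by
    rw [hI, Submodule.zero_eq_bot, Submodule.bot_smul]
  rw [← Cardinal.mk_congr (Submodule.quotEquivOfEqBot _ hbot).toEquiv]
  exact mk_quotient_pow_smul_top_le hfg M n
end

section
/- Let 𝒟 be a Grothendieck category with generator G, and define |D| to be the cardinality of Hom(G,D). For every exact sequence 0 → A → B → C in 𝒟 (i.e. A → B a monomorphism whose image is the kernel of B → C), one has: (1) |A| ≤ |B|; and (2) |B| ≤ |A| · |C|. -/
/-!
Applying `Hom(G, -)` to `0 ⟶ A ⟶ B ⟶ C` gives a left exact sequence of abelian groups.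
Postcomposition with `f` is injective, which gives the first bound. For the second, choose a
set-theoretic section `s` of postcomposition with `g` over its range; then `b - s (b ≫ g)` is
killed by `g`, hence lifts through `f`, and `b` is recovered from this lift and `b ≫ g`.
-/

open CategoryTheory CategoryTheory.Limits

universe v u

/-- Let `𝒟` be a Grothendieck category with generator `G`, and define `|D|` to be the
cardinality of `Hom(G,D)`.  For every exact sequence `0 → A → B → C` in `𝒟` one has
`|A| ≤ |B|` and `|B| ≤ |A| · |C|`. -/
theorem cardinal_hom_of_left_exact_sequence
    {D : Type u} [Category.{v} D] [Abelian D] [HasColimits D] [AB5 D]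
    (G : D) (hG : IsSeparator G)
    {A B C : D} (f : A ⟶ B) (g : B ⟶ C) (hf : Mono f) (w : f ≫ g = 0)
    (hexact : (ShortComplex.mk f g w).Exact) :
    Cardinal.mk (G ⟶ A) ≤ Cardinal.mk (G ⟶ B) ∧
      Cardinal.mk (G ⟶ B) ≤ Cardinal.mk (G ⟶ A) * Cardinal.mk (G ⟶ C) := by
  refine ⟨Cardinal.mk_le_of_injective (f := fun a : G ⟶ A => a ≫ f)
    fun a₁ a₂ h => (cancel_mono f).1 h, ?_⟩
  let s : (G ⟶ C) → (G ⟶ B) := Function.invFun fun b : G ⟶ B => b ≫ g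
  have hs (b : G ⟶ B) : s (b ≫ g) ≫ g = b ≫ g :=
    Function.invFun_eq (f := fun b : G ⟶ B => b ≫ g) ⟨b, rfl⟩
  have hlift (b : G ⟶ B) : ∃ a : G ⟶ A, a ≫ f = b - s (b ≫ g) := by
    have : Mono (ShortComplex.mk f g w).f := hf
    have hb : (b - s (b ≫ g)) ≫ g = 0 := by rw [Preadditive.sub_comp, hs, sub_self]
    exact ⟨hexact.lift _ hb, hexact.lift_f _ hb⟩
  choose r hr using hlift
  rw [Cardinal.mul_def]
  refine Cardinal.mk_le_of_injective (f := fun b : G ⟶ B => (r b, b ≫ g)) fun b₁ b₂ h => ?_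
  obtain ⟨h₁, h₂⟩ := Prod.mk.inj h
  have h₃ := hr b₁
  rw [h₁, h₂, hr b₂] at h₃
  exact (sub_left_injective h₃).symm
end

section
/- Let 𝒟 be a Grothendieck category with generator G, and define |D| to be the cardinality of Hom(G,D). For every epimorphism f : A → B in 𝒟, one has |B| ≤ (2·|A|)^{|G|}, where |G| is the cardinality of Hom(G,G). -/
/-!
Given `b : G ⟶ B`, record for each endomorphism `g` of `G` one chosen lift `a : G ⟶ A` of `g ≫ b`
along `f`, or `none` if no lift exists (`chosenLift`). The resulting function
`(G ⟶ G) → Option (G ⟶ A)` determines `b` (`chosenLift_injective`): the endomorphisms which factor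
through the projection `pullback b f ⟶ G` are liftable, so the record determines their composite
with `b`; since `G` is a separator and the projection is an epimorphism (epimorphisms in an abelian
category are stable under pullback), these composites determine `b`.
As `G ⟶ A` contains `0`, `Option (G ⟶ A)` has at most `2·|A|` elements.
-/

open CategoryTheory CategoryTheory.Limits

universe v u

open Classical in
/-- A choice, for each endomorphism `g` of `G`, of a lift of `g ≫ b` along `f`; the value is `none`
when no lift exists. -/
noncomputable def chosenLift {D : Type u} [Category.{v} D] {G A B : D} (f : A ⟶ B) (b : G ⟶ B)
    (g : G ⟶ G) : Option (G ⟶ A) :=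
  if h : ∃ a : G ⟶ A, a ≫ f = g ≫ b then some h.choose else none

lemma chosenLift_spec {D : Type u} [Category.{v} D] {G A B : D} {f : A ⟶ B} {b : G ⟶ B}
    {g : G ⟶ G} {a : G ⟶ A} (h : chosenLift f b g = some a) : a ≫ f = g ≫ b := by
  unfold chosenLift at h
  split_ifs at h with h'
  rw [← Option.some.inj h]
  exact h'.choose_spec

lemma exists_chosenLift_eq_some {D : Type u} [Category.{v} D] {G A B : D} {f : A ⟶ B} {b : G ⟶ B}
    {g : G ⟶ G} (h : ∃ a : G ⟶ A, a ≫ f = g ≫ b) : ∃ a, chosenLift f b g = some a :=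
  ⟨h.choose, dif_pos h⟩

lemma chosenLift_injective {D : Type u} [Category.{v} D] [Abelian D] {G : D} (hG : IsSeparator G)
    {A B : D} (f : A ⟶ B) [Epi f] :
    Function.Injective (chosenLift f : (G ⟶ B) → (G ⟶ G) → Option (G ⟶ A)) := by
  intro b b' hbb
  rw [← cancel_epi (pullback.fst b f)]
  refine hG.def _ _ fun x => ?_
  obtain ⟨a, ha⟩ := exists_chosenLift_eq_some (f := f) (b := b) (g := x ≫ pullback.fst b f)
    ⟨x ≫ pullback.snd b f, by simp [pullback.condition]⟩
  have h := chosenLift_spec ha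
  rw [hbb] at ha
  have h' := chosenLift_spec ha
  simpa using h.symm.trans h'

/-- Let `𝒟` be a Grothendieck category with generator `G`, and define `|D|` to be the
cardinality of `Hom(G,D)`.  For every epimorphism `f : A → B` in `𝒟` one has
`|B| ≤ (2·|A|)^{|G|}`, where `|G|` is the cardinality of `Hom(G,G)`. -/
theorem cardinal_hom_le_of_epi
    {D : Type u} [Category.{v} D] [Abelian D] [HasColimits D] [AB5 D]
    (G : D) (hG : IsSeparator G)
    {A B : D} (f : A ⟶ B) (hf : Epi f) :
    Cardinal.mk (G ⟶ B) ≤ (2 * Cardinal.mk (G ⟶ A)) ^ Cardinal.mk (G ⟶ G) := by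
  have h := Cardinal.mk_le_of_injective (chosenLift_injective hG f)
  rw [← Cardinal.power_def, Cardinal.mk_option] at h
  refine h.trans (Cardinal.power_le_power_right ?_)
  have h1 : (1 : Cardinal) ≤ Cardinal.mk (G ⟶ A) :=
    Cardinal.one_le_iff_ne_zero.2 (Cardinal.mk_ne_zero_iff.2 ⟨0⟩)
  rw [two_mul]
  gcongr
end

section
/- Let 𝒟 be a Grothendieck category with generator G, define |D| to be the cardinality of Hom(G,D), and let κ = 2^β for an infinite cardinal β with |G| = #Hom(G,G) ≤ β. Then the class 𝒟_κ of objects D of 𝒟 with |D| ≤ κ is a Serre subcategory of 𝒟: it is closed under subobjects, quotient objects, and extensions (if 0 → A → B → C → 0 is exact with A and C in 𝒟_κ, then B ∈ 𝒟_κ). -/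
/-!
Closure under subobjects is immediate, since `Hom(G, -)` preserves monomorphisms.

For an extension `0 ⟶ A ⟶ B ⟶ C ⟶ 0`, left exactness of `Hom(G, -)` shows that the fibres of
`Hom(G, B) ⟶ Hom(G, C)` embed in `Hom(G, A)`, so `|B| ≤ |C| * |A| ≤ κ * κ = κ`.

For a quotient `f : A ⟶ B`, a morphism `h : G ⟶ B` need not lift along `f`, but it does so locally:
since `G ×[B] A ⟶ G` is an epimorphism and `G` is a separator, the endomorphisms `p` of `G` such
that `p ≫ h` lifts along `f` are jointly epimorphic. Hence `h` is determined by the partial function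
sending each such `p` to a chosen lift of `p ≫ h`. There are at most `(κ + 1) ^ β = κ` such partial
functions, because `κ = 2 ^ β`.
-/

open CategoryTheory CategoryTheory.Limits

universe v u

/-- The partial function on `End G` sending `p` to a chosen lift of `p ≫ h` along `f`, if there is
one; the value `none` records that `p ≫ h` does not lift. -/
noncomputable def localLift {D : Type u} [Category.{v} D] {G A B : D} (f : A ⟶ B) (h : G ⟶ B)
    (p : G ⟶ G) : Option (G ⟶ A) :=
  open Classical in if H : ∃ s : G ⟶ A, s ≫ f = p ≫ h then some H.choose else none

theorem comp_eq_of_localLift_eq {D : Type u} [Category.{v} D] {G A B : D} {f : A ⟶ B}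
    {h h' : G ⟶ B} {p : G ⟶ G} (hp : ∃ s : G ⟶ A, s ≫ f = p ≫ h)
    (e : localLift f h p = localLift f h' p) : p ≫ h = p ≫ h' := by
  by_cases hp' : ∃ s : G ⟶ A, s ≫ f = p ≫ h'
  · simp only [localLift, dif_pos hp, dif_pos hp', Option.some.injEq] at e
    rw [← hp.choose_spec, ← hp'.choose_spec, e]
  · simp [localLift, hp, hp'] at e

/-- When `G` is a separator and `f` is an epimorphism, the chosen local lifts of a morphism
`G ⟶ B` determine it. -/
theorem localLift_injective {D : Type u} [Category.{v} D] [Abelian D] {G A B : D}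
    (hG : IsSeparator G) (f : A ⟶ B) [Epi f] :
    Function.Injective (localLift (G := G) f) := by
  intro h h' e
  rw [← cancel_epi (pullback.snd f h)]
  refine hG.def _ _ fun x => ?_
  simpa using comp_eq_of_localLift_eq (p := x ≫ pullback.snd f h)
    ⟨x ≫ pullback.fst f h, by simp [pullback.condition]⟩ (congrFun e _)

theorem mk_hom_le_of_shortExact {D : Type u} [Category.{v} D] [Abelian D] (G : D)
    {S : ShortComplex D} (hS : S.ShortExact) :
    Cardinal.mk (G ⟶ S.X₂) ≤ Cardinal.mk (G ⟶ S.X₃) * Cardinal.mk (G ⟶ S.X₁) := by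
  have := hS.mono_f
  -- `σ c` is a lift of `c` along `S.g` whenever one exists.
  have hσ : ∀ c : G ⟶ S.X₃, ∃ b : G ⟶ S.X₂, ∀ h : G ⟶ S.X₂, h ≫ S.g = c → b ≫ S.g = c := by
    intro c
    by_cases hc : ∃ h : G ⟶ S.X₂, h ≫ S.g = c
    · exact ⟨hc.choose, fun _ _ => hc.choose_spec⟩
    · exact ⟨0, fun h hh => (hc ⟨h, hh⟩).elim⟩
  choose σ hσ using hσ
  have hk : ∀ h : G ⟶ S.X₂, (h - σ (h ≫ S.g)) ≫ S.g = 0 := fun h => by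
    rw [Preadditive.sub_comp, hσ _ h rfl, sub_self]
  rw [Cardinal.mul_def]
  refine Cardinal.mk_le_of_injective
    (f := fun h : G ⟶ S.X₂ => (h ≫ S.g, hS.exact.lift _ (hk h))) fun h h' e => ?_
  obtain ⟨e₁, e₂⟩ := Prod.mk.inj e
  have e₃ := congrArg (· ≫ S.f) e₂
  simp only [ShortComplex.Exact.lift_f, e₁] at e₃
  exact sub_left_injective e₃

/-- Let `𝒟` be a Grothendieck category with generator `G`, let `|D|` denote the cardinality
of `Hom(G,D)`, and let `κ = 2^β` for an infinite cardinal `β` with `|G| ≤ β`.  Then the class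
of objects `D` with `|D| ≤ κ` is a Serre subcategory: it is closed under subobjects,
quotient objects and extensions. -/
theorem serre_subcategory_of_bounded_cardinality
    {D : Type u} [Category.{v} D] [Abelian D] [HasColimits D] [AB5 D]
    (G : D) (hG : IsSeparator G)
    (β : Cardinal.{v}) (hβ : Cardinal.aleph0 ≤ β) (hGβ : Cardinal.mk (G ⟶ G) ≤ β)
    (κ : Cardinal.{v}) (hκ : κ = 2 ^ β) :
    (∀ (A B : D) (f : A ⟶ B), Mono f → Cardinal.mk (G ⟶ B) ≤ κ → Cardinal.mk (G ⟶ A) ≤ κ) ∧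
    (∀ (A B : D) (f : A ⟶ B), Epi f → Cardinal.mk (G ⟶ A) ≤ κ → Cardinal.mk (G ⟶ B) ≤ κ) ∧
    (∀ (A B C : D) (f : A ⟶ B) (g : B ⟶ C) (w : f ≫ g = 0),
      (ShortComplex.mk f g w).ShortExact →
      Cardinal.mk (G ⟶ A) ≤ κ → Cardinal.mk (G ⟶ C) ≤ κ → Cardinal.mk (G ⟶ B) ≤ κ) := by
  have hκ₀ : Cardinal.aleph0 ≤ κ := hκ ▸ hβ.trans (Cardinal.cantor β).le
  refine ⟨fun A B f _ hB => ?_, fun A B f _ hA => ?_, fun A B C f g w hS hA hC => ?_⟩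
  · exact (Cardinal.mk_le_of_injective (f := fun h : G ⟶ A => h ≫ f)
      fun _ _ e => (cancel_mono f).1 e).trans hB
  · calc Cardinal.mk (G ⟶ B)
        ≤ Cardinal.mk ((G ⟶ G) → Option (G ⟶ A)) :=
          Cardinal.mk_le_of_injective (localLift_injective hG f)
      _ = (Cardinal.mk (G ⟶ A) + 1) ^ Cardinal.mk (G ⟶ G) := by simp
      _ ≤ κ ^ Cardinal.mk (G ⟶ G) :=
          Cardinal.power_le_power_right
            (Cardinal.add_le_of_le hκ₀ hA (Cardinal.one_le_aleph0.trans hκ₀))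
      _ ≤ κ ^ β :=
          Cardinal.power_le_power_left (Cardinal.aleph0_pos.trans_le hκ₀).ne' hGβ
      _ = κ := by rw [hκ, ← Cardinal.power_mul, Cardinal.mul_eq_self hβ]
  · exact (mk_hom_le_of_shortExact G hS).trans
      ((mul_le_mul' hC hA).trans (Cardinal.mul_eq_self hκ₀).le)
end

section
/- Let 𝒞 be an abelian category with small filtered colimits. The colimit of any small filtered diagram of fp-injective objects of 𝒞 is fp-injective. -/
open CategoryTheory CategoryTheory.Limits Opposite

universe v u

/-- An object `X` is finitely presented if `Hom(X,−)` preserves small filtered colimits. -/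
def IsFinitelyPresented {C : Type u} [Category.{v} C] (X : C) : Prop :=
  ∀ (J : Type v) (_ : SmallCategory J) (_ : IsFiltered J),
    PreservesColimitsOfShape J (coyoneda.obj (op X))

/-- An object `C` of an abelian category is fp-injective if every monomorphism `X → Y`
between finitely presented objects induces a surjection `Hom(Y,C) → Hom(X,C)`. -/
def IsFpInjective {C : Type u} [Category.{v} C] (Z : C) : Prop :=
  ∀ ⦃X Y : C⦄ (f : X ⟶ Y), Mono f → IsFinitelyPresented X → IsFinitelyPresented Y →
    Function.Surjective (fun g : Y ⟶ Z => f ≫ g)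

/-- In an abelian category with small filtered colimits, the colimit of any small filtered
diagram of fp-injective objects is fp-injective. -/
theorem isFpInjective_colimit_of_filtered
    {C : Type u} [Category.{v} C] [Abelian C] [HasFilteredColimitsOfSize.{v, v} C]
    (J : Type v) [SmallCategory J] [IsFiltered J] (F : J ⥤ C)
    (h : ∀ j : J, IsFpInjective (F.obj j)) :
    IsFpInjective (colimit F) := by
  intro X Y f hf hX hY g
  have := hX J inferInstance inferInstance
  -- Finite presentation of `X` factors `g` through a stage `F.obj j`.
  obtain ⟨j, p, hp⟩ := Types.jointly_surjective_of_isColimit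
    (isColimitOfPreserves (coyoneda.obj (op X)) (colimit.isColimit F)) g
  obtain ⟨q, hq⟩ := h j f hf hX hY p
  refine ⟨q ≫ colimit.ι F j, ?_⟩
  dsimp at hq hp ⊢
  rw [← Category.assoc, hq]
  exact hp
end

section
/- Let i : ℒ ⥤ 𝒞 be a functor between Grothendieck categories admitting a left adjoint a : 𝒞 ⥤ ℒ. The following are equivalent: (1) i is a localization, i.e. i is fully faithful and a is exact; (2) i preserves injective objects and its restriction to injectives is fully faithful, i.e. for all injective objects I, I' of ℒ the map ℒ(I,I') → 𝒞(i(I),i(I')) is bijective. -/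
/-!
Since `i` is a right adjoint, it preserves limits, and `a` preserves colimits. For the direction from
injectives to localization, two facts carry the proof.

* As `L` has enough injectives, a left adjoint of a functor preserving injectives preserves
  monomorphisms; being right exact, `a` is then exact.
* Under the adjunction, `i` on maps `X ⟶ Y` is precomposition with the counit `ε : a (i X) ⟶ X`.
  Full faithfulness on injectives therefore says that precomposition with `ε` at an injective `I`
  is bijective on maps into injectives, which cogenerate `L`; so `ε` is an isomorphism at `I`.
  Embedding into injectives, `ε` is a monomorphism everywhere. A general `X` is the kernel of a map
  `I ⟶ I / X` with `I` injective, and `i ⋙ a` is left exact; as `ε` is an isomorphism at `I` and a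
  monomorphism at `I / X`, it is an isomorphism at `X` too.

The converse is formal: right adjoints of functors preserving monomorphisms preserve injectives.
-/

open CategoryTheory CategoryTheory.Limits

universe v u₁ u₂

section

variable {L : Type u₁} [Category.{v} L] [Abelian L] {C : Type u₂} [Category.{v} C]
  {i : L ⥤ C} {a : C ⥤ L}

/-- A left adjoint preserving monomorphisms between abelian categories is left exact. -/
lemma leftAdjoint_preservesFiniteLimits [Abelian C] (adj : a ⊣ i) [a.PreservesMonomorphisms] :
    PreservesFiniteLimits a := by
  have : PreservesColimitsOfSize.{0, 0} a := adj.leftAdjoint_preservesColimits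
  have : PreservesFiniteColimits a := PreservesColimitsOfSize.preservesFiniteColimits _
  have : PreservesBinaryBiproducts a := preservesBinaryBiproducts_of_preservesBinaryCoproducts _
  have : a.Additive := Functor.additive_of_preservesBinaryBiproducts _
  have : a.PreservesHomology := a.preservesHomology_of_preservesMonos_and_cokernels
  exact a.preservesFiniteLimits_of_preservesHomology

variable [EnoughInjectives L]

/-- The counit is an isomorphism at an injective `I`: it is a monomorphism because an
embedding of its source into an injective factors through it, and an epimorphism because maps out of `I` can be tested after embedding their target
into an injective. -/
lemma isIso_counit_app_of_injective (adj : a ⊣ i)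
    (hff : ∀ I I' : L, Injective I → Injective I' →
      Function.Bijective (fun f : I ⟶ I' => i.map f))
    (I : L) (hI : Injective I) : IsIso (adj.counit.app I) := by
  have key : ∀ J : L, Injective J →
      Function.Bijective (fun f : I ⟶ J => adj.counit.app I ≫ f) := fun J hJ => by
    have h := (adj.homEquiv (i.obj I) J).symm.bijective.comp (hff I J hI hJ)
    refine (congrArg Function.Bijective (funext fun f => ?_)).mp h
    simp [Adjunction.homEquiv_counit]
  have : Mono (adj.counit.app I) := by
    obtain ⟨f, hf⟩ := (key (Injective.under (a.obj (i.obj I))) inferInstance).2 (Injective.ι _)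
    exact mono_of_mono_fac hf
  have : Epi (adj.counit.app I) := ⟨fun {Z} f g h => by
    rw [← cancel_mono (Injective.ι Z)]
    apply (key (Injective.under Z) inferInstance).1
    simp only [← Category.assoc, h]⟩
  exact isIso_of_mono_of_epi _

/-- If `F` is left exact and a natural transformation `ε` from `F` to the identity is an isomorphism
at injectives, then it is an isomorphism everywhere: it is mono everywhere, and `X` is the kernel of
a map `I ⟶ I / X` with `I` injective. -/
lemma isIso_of_isIso_on_injectives (F : L ⥤ L) [PreservesFiniteLimits F]
    (ε : ∀ X : L, F.obj X ⟶ X)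
    (nat : ∀ {X Y : L} (f : X ⟶ Y), F.map f ≫ ε Y = ε X ≫ f)
    (inj : ∀ I : L, Injective I → IsIso (ε I)) (X : L) : IsIso (ε X) := by
  have mono : ∀ X : L, Mono (ε X) := fun X => by
    have := inj (Injective.under X) inferInstance
    have : Mono (F.map (Injective.ι X) ≫ ε (Injective.under X)) := mono_comp _ _
    exact mono_of_mono_fac (nat (Injective.ι X)).symm
  have := mono X
  have := inj (Injective.under X) inferInstance
  have : PreservesBinaryBiproducts F := preservesBinaryBiproducts_of_preservesBinaryProducts _
  let S := ShortComplex.mk (Injective.ι X) (cokernel.π (Injective.ι X)) (cokernel.condition _)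
  have hS : (S.map F).Exact :=
    (ShortComplex.exact_cokernel (Injective.ι X)).map_of_mono_of_preservesKernel _
      (inferInstanceAs (Mono (Injective.ι X))) inferInstance
  have : Mono (S.map F).f := inferInstanceAs (Mono (F.map (Injective.ι X)))
  -- As `ε` is mono at the cokernel, the embedding of `X` followed by the inverse of `ε` at the
  -- injective lands in the kernel `F X`; this gives a section of `ε` at `X`.
  obtain ⟨s, hs⟩ : ∃ s : X ⟶ F.obj X,
      s ≫ F.map (Injective.ι X) = Injective.ι X ≫ inv (ε (Injective.under X)) := by
    let k : X ⟶ F.obj (Injective.under X) := Injective.ι X ≫ inv (ε (Injective.under X))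
    refine hS.lift' k ?_
    have := mono (cokernel (Injective.ι X))
    change k ≫ F.map (cokernel.π (Injective.ι X)) = 0
    rw [← cancel_mono (ε (cokernel (Injective.ι X))), Category.assoc, nat]
    simp [k]
  have hs' : s ≫ ε X = 𝟙 X := by
    rw [← cancel_mono (Injective.ι X), Category.assoc, ← nat, reassoc_of% hs]
    simp
  have : IsSplitEpi (ε X) := ⟨⟨s, hs'⟩⟩
  exact isIso_of_mono_of_isSplitEpi _

lemma isIso_counit_of_ff_on_injectives [Abelian C] (adj : a ⊣ i) [a.PreservesMonomorphisms]
    (hff : ∀ I I' : L, Injective I → Injective I' →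
      Function.Bijective (fun f : I ⟶ I' => i.map f)) : IsIso adj.counit := by
  have : PreservesFiniteLimits a := leftAdjoint_preservesFiniteLimits adj
  have : PreservesLimitsOfSize.{0, 0} i := adj.rightAdjoint_preservesLimits
  have : PreservesFiniteLimits i := PreservesLimitsOfSize.preservesFiniteLimits _
  have : PreservesFiniteLimits (i ⋙ a) := comp_preservesFiniteLimits _ _
  have : ∀ X : L, IsIso (adj.counit.app X) :=
    isIso_of_isIso_on_injectives (i ⋙ a) (fun X => adj.counit.app X)
      (fun f => adj.counit.naturality f) (isIso_counit_app_of_injective adj hff)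
  exact NatIso.isIso_of_isIso_app _

end

/-- Let `i : ℒ ⥤ 𝒞` be a functor between Grothendieck categories with left adjoint `a`.
Then `i` is a localization (i.e. `i` is fully faithful and `a` is exact) if and only if
`i` preserves injective objects and its restriction to injectives is fully faithful. -/
theorem localization_iff_preserves_injectives_and_ff_on_injectives
    {L : Type u₁} [Category.{v} L] [Abelian L] [HasColimits L] [AB5 L] [HasSeparator L]
    {C : Type u₂} [Category.{v} C] [Abelian C] [HasColimits C] [AB5 C] [HasSeparator C]
    (i : L ⥤ C) (a : C ⥤ L) (adj : a ⊣ i) :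
    (i.Full ∧ i.Faithful ∧ PreservesFiniteLimits a ∧ PreservesFiniteColimits a) ↔
      ((∀ I : L, Injective I → Injective (i.obj I)) ∧
        ∀ (I I' : L), Injective I → Injective I' →
          Function.Bijective (fun f : I ⟶ I' => i.map f)) := by
  have : IsGrothendieckAbelian.{v} L := {}
  constructor
  · rintro ⟨_, _, _, _⟩
    exact ⟨fun I hI => adj.map_injective I hI, fun I I' _ _ => ⟨i.map_injective, i.map_surjective⟩⟩
  · rintro ⟨hinj, hff⟩
    have : i.PreservesInjectiveObjects := ⟨fun h => hinj _ h⟩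
    have : a.PreservesMonomorphisms :=
      a.preservesMonomorphisms_of_adjunction_of_preservesInjectiveObjects adj
    have := isIso_counit_of_ff_on_injectives adj hff
    have h := adj.fullyFaithfulROfIsIsoCounit
    have : PreservesColimitsOfSize.{0, 0} a := adj.leftAdjoint_preservesColimits
    exact ⟨h.full, h.faithful, leftAdjoint_preservesFiniteLimits adj,
      PreservesColimitsOfSize.preservesFiniteColimits _⟩
end

section
/- Let F : 𝔞 ⥤ 𝔟 be an additive, full, essentially surjective functor between preadditive categories with nilpotent kernel ideal. If f : A₁ → A₂ is a morphism of 𝔞 such that F(f) is an isomorphism in 𝔟, then f is an isomorphism in 𝔞. -/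
/-!
Fullness lifts the inverse of `F(f)` to a morphism `g` of `𝔞`. The functor sends both `f ≫ g`
and `g ≫ f` to identities, so each differs from an identity by an endomorphism `e` in the
kernel ideal. Such an `e` is nilpotent, so `1 - e` is a unit of the endomorphism ring
(`isIso_of_map_eq_id`). Thus `f ≫ g` and `g ≫ f` are isomorphisms: `f` is both a split
monomorphism and a split epimorphism, hence an isomorphism.
-/

open CategoryTheory CategoryTheory.Limits

universe v₁ v₂ u₁ u₂

/-- `KerCompPow F n f` holds if `f` is a composite of `n` morphisms each of which is sent
to zero by `F`. -/
inductive KerCompPow {A : Type u₁} [Category.{v₁} A] {B : Type u₂} [Category.{v₂} B]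
    [Preadditive A] [Preadditive B] (F : A ⥤ B) :
    ℕ → ∀ {X Y : A}, (X ⟶ Y) → Prop
  | single {X Y : A} (f : X ⟶ Y) (hf : F.map f = 0) : KerCompPow F 1 f
  | comp {n : ℕ} {X Y Z : A} (f : X ⟶ Y) (g : Y ⟶ Z) (hf : KerCompPow F n f)
      (hg : F.map g = 0) : KerCompPow F (n + 1) (f ≫ g)

/-- A functor `F : 𝔞 ⥤ 𝔟` between preadditive categories has nilpotent kernel ideal if
there is `n ≥ 1` such that every composite of `n` morphisms killed by `F` is zero. -/
def HasNilpotentKernelIdeal {A : Type u₁} [Category.{v₁} A] {B : Type u₂} [Category.{v₂} B]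
    [Preadditive A] [Preadditive B] (F : A ⥤ B) : Prop :=
  ∃ n : ℕ, 0 < n ∧ ∀ {X Y : A} (f : X ⟶ Y), KerCompPow F n f → f = 0

/-- In `End X`, the `n`-th power of an endomorphism killed by `F` is an `n`-fold composite
of morphisms killed by `F`. -/
theorem kerCompPow_end_pow {A : Type u₁} [Category.{v₁} A] {B : Type u₂} [Category.{v₂} B]
    [Preadditive A] [Preadditive B] (F : A ⥤ B) {X : A} (e : End X) (he : F.map e = 0)
    (n : ℕ) : KerCompPow F (n + 1) (e ^ (n + 1) : End X) := by
  induction n with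
  | zero => simpa using KerCompPow.single (F := F) e he
  | succ n ih =>
    rw [pow_succ' e (n + 1)]
    exact KerCompPow.comp _ _ ih he

/-- An endomorphism that `F` sends to the identity is `1 - e` with `e` killed by `F`, hence
nilpotent, so it is invertible. -/
theorem isIso_of_map_eq_id {A : Type u₁} [Category.{v₁} A] {B : Type u₂} [Category.{v₂} B]
    [Preadditive A] [Preadditive B] (F : A ⥤ B) [F.Additive]
    (hnil : HasNilpotentKernelIdeal F) {X : A} (u : X ⟶ X) (hu : F.map u = 𝟙 (F.obj X)) :
    IsIso u := by
  obtain ⟨n, hn, h⟩ := hnil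
  obtain ⟨n, rfl⟩ := Nat.exists_eq_succ_of_ne_zero hn.ne'
  let e : End X := 𝟙 X - u
  have he : F.map e = 0 := by simp [e, hu]
  have hpow : IsNilpotent e := ⟨n + 1, h _ (kerCompPow_end_pow F e he n)⟩
  have hunit : IsUnit (1 - e) := hpow.isUnit_one_sub
  have hue : (1 - e : End X) = u := sub_sub_cancel (𝟙 X) u
  rw [hue] at hunit
  exact (isUnit_iff_isIso u).mp hunit

/-- Let `F : 𝔞 ⥤ 𝔟` be an additive, full, essentially surjective functor between
preadditive categories with nilpotent kernel ideal.  If `F(f)` is an isomorphism then `f`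
is an isomorphism. -/
theorem isIso_of_map_isIso_of_nilpotent_kernel_ideal
    {A : Type u₁} [Category.{v₁} A] {B : Type u₂} [Category.{v₂} B]
    [Preadditive A] [Preadditive B]
    (F : A ⥤ B) [F.Additive] [F.Full] [F.EssSurj]
    (hnil : HasNilpotentKernelIdeal F)
    {A₁ A₂ : A} (f : A₁ ⟶ A₂) (hf : IsIso (F.map f)) :
    IsIso f := by
  obtain ⟨g, hg⟩ := F.map_surjective (inv (F.map f))
  have hfg : IsIso (f ≫ g) := isIso_of_map_eq_id F hnil _ (by simp [hg])
  have hgf : IsIso (g ≫ f) := isIso_of_map_eq_id F hnil _ (by simp [hg])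
  have : IsSplitMono f := ⟨⟨⟨g ≫ inv (f ≫ g), by rw [← Category.assoc, IsIso.hom_inv_id]⟩⟩⟩
  have : Epi f := epi_of_epi g f
  exact isIso_of_epi_of_isSplitMono f
end

section
/- Let F : 𝔞 ⥤ 𝔟 be an additive, full, essentially surjective functor between preadditive categories with nilpotent kernel ideal. If 𝔟 is Karoubian (every idempotent splits), then 𝔞 is Karoubian. -/
/-!
Let `p` be an idempotent of `X`. A splitting of `F.map p` passes through an object isomorphic to
some `F.obj Y`, and fullness lifts it to `i : Y ⟶ X` and `e : X ⟶ Y`; composing with `p` one may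
assume `i ≫ p = i` and `p ≫ e = e`. Then `i ≫ e` differs from `𝟙 Y` by a morphism killed by `F`,
which is nilpotent (`isNilpotent_of_map_eq_zero`), so it is invertible (`isIso_of_map_eq_id`) and
`e` can be corrected so that `i ≫ e = 𝟙 Y`. Now `p` and `e ≫ i` are idempotents with
`p ≫ (e ≫ i) = e ≫ i = (e ≫ i) ≫ p`, so their difference is an idempotent; it is killed by `F`,
hence nilpotent, hence zero.
-/

open CategoryTheory CategoryTheory.Limits

universe v₁ v₂ u₁ u₂

section Helpers

variable {A : Type u₁} [Category.{v₁} A] {B : Type u₂} [Category.{v₂} B]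
  [Preadditive A] [Preadditive B] {F : A ⥤ B}

lemma kerCompPow_pow {X : A} (f : End X) (hf : F.map f = 0) (n : ℕ) :
    KerCompPow F (n + 1) (f ^ (n + 1) : End X) := by
  induction n with
  | zero => simpa using KerCompPow.single f hf
  | succ n ih =>
    rw [pow_succ']
    exact KerCompPow.comp _ f ih hf

lemma isNilpotent_of_map_eq_zero (hnil : HasNilpotentKernelIdeal F) {X : A} (f : End X)
    (hf : F.map f = 0) : IsNilpotent f := by
  obtain ⟨n, hn, h⟩ := hnil
  obtain ⟨m, rfl⟩ := Nat.exists_eq_succ_of_ne_zero hn.ne'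
  exact ⟨m + 1, h _ (kerCompPow_pow f hf m)⟩

lemma isIso_of_map_eq_id_s16 [F.Additive] (hnil : HasNilpotentKernelIdeal F) {X : A} (u : End X)
    (hu : F.map u = 𝟙 _) : IsIso u := by
  have h0 : F.map (1 - u) = 0 :=
    (F.map_sub (f := 𝟙 X) (g := u)).trans (by simp [hu])
  have h1 := (isNilpotent_of_map_eq_zero hnil (1 - u) h0).isUnit_one_sub
  rw [sub_sub_cancel] at h1
  exact (isUnit_iff_isIso u).1 h1

lemma eq_zero_of_idem_of_map_eq_zero (hnil : HasNilpotentKernelIdeal F) {X : A} (d : End X)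
    (hd : IsIdempotentElem d) (hF : F.map d = 0) : d = 0 := by
  obtain ⟨n, hn⟩ := isNilpotent_of_map_eq_zero hnil d hF
  have h1 := hd.pow_succ_eq n
  rw [pow_succ, hn, zero_mul] at h1
  exact h1.symm

end Helpers

/-- Let `F : 𝔞 ⥤ 𝔟` be an additive, full, essentially surjective functor between
preadditive categories with nilpotent kernel ideal.  If `𝔟` is Karoubian (every idempotent
splits), then `𝔞` is Karoubian. -/
theorem isIdempotentComplete_of_nilpotent_kernel_ideal
    {A : Type u₁} [Category.{v₁} A] {B : Type u₂} [Category.{v₂} B]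
    [Preadditive A] [Preadditive B]
    (F : A ⥤ B) [F.Additive] [F.Full] [F.EssSurj]
    (hnil : HasNilpotentKernelIdeal F)
    (hB : IsIdempotentComplete B) :
    IsIdempotentComplete A := by
  constructor
  intro X p hp
  obtain ⟨Y', i', e', hie, hei⟩ := hB.idempotents_split (F.obj X) (F.map p)
    (by rw [← F.map_comp, hp])
  let φ := F.objObjPreimageIso Y'
  obtain ⟨i₀, hi₀⟩ := F.map_surjective (φ.hom ≫ i')
  obtain ⟨e₀, he₀⟩ := F.map_surjective (e' ≫ φ.inv)
  have hu : F.map ((i₀ ≫ p) ≫ p ≫ e₀) = 𝟙 _ := by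
    simp only [F.map_comp, hi₀, he₀, ← hei, Category.assoc]
    simp [reassoc_of% hie]
  have := isIso_of_map_eq_id_s16 hnil _ hu
  obtain ⟨v, hv⟩ : ∃ v, v = inv ((i₀ ≫ p) ≫ p ≫ e₀) := ⟨_, rfl⟩
  have huv : i₀ ≫ p ≫ p ≫ e₀ ≫ v = 𝟙 _ := by
    rw [hv]
    simpa only [Category.assoc] using IsIso.hom_inv_id ((i₀ ≫ p) ≫ p ≫ e₀)
  have hFv : F.map v = 𝟙 _ := by
    rw [hv, F.map_inv]
    simp only [hu, IsIso.inv_id]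
  refine ⟨_, i₀ ≫ p, p ≫ e₀ ≫ v, by simpa only [Category.assoc] using huv, ?_⟩
  -- the split idempotent `q` absorbs `p` on both sides, so `p - q` is an idempotent killed by `F`
  obtain ⟨q, hq⟩ : ∃ q, q = (p ≫ e₀ ≫ v) ≫ i₀ ≫ p := ⟨_, rfl⟩
  have hqq : q ≫ q = q := by
    simp only [hq, Category.assoc, reassoc_of% huv]
  have hpq : p ≫ q = q := by simp only [hq, Category.assoc, reassoc_of% hp]
  have hqp : q ≫ p = q := by simp only [hq, Category.assoc, hp]
  have hFq : F.map q = F.map p := by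
    simp only [hq, F.map_comp, hi₀, he₀, hFv, ← hei, Category.assoc]
    simp [reassoc_of% hie]
  rw [← hq]
  refine (sub_eq_zero.1 (eq_zero_of_idem_of_map_eq_zero hnil (p - q) ?_ ?_)).symm
  · change (p - q) ≫ (p - q) = p - q
    simp [hp, hqq, hpq, hqp]
  · simp [hFq]
end
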